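/- arXiv:1112.5415 — 2 statements merged into one kernel-verified Lean document; each statement's English description precedes it below -/
import Mathlib

section
/- Let ρ₁ ≠ ρ₂ be two roots in Φ, let x ∈ L(ρ̂₁, ρ̂₂) ∩ Q, and let w ∈ W. Then w(x) ∉ V₀, and w·x ∈ L(w·ρ̂₁, w·ρ̂₂) ∩ Q, where L(u,v) denotes the affine line through two distinct points u,v of V₁. -/
open Filter Topology

noncomputable section

variable {ι V : Type*} [Fintype ι] [NormedAddCommGroup V] [NormedSpace ℝ V]

/-- The set of simple `B`-reflections: the linear automorphisms of `V` given by the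
`B`-reflection formula `u ↦ u - 2 (B α u / B α α) • α` associated to a simple root `α ∈ Δ`. -/
def simpleReflections (B : LinearMap.BilinForm ℝ V) (Δ : Module.Basis ι ℝ V) :
    Set (V ≃ₗ[ℝ] V) :=
  { e | ∃ i : ι, ∀ u : V, e u = u - (2 * B (Δ i) u / B (Δ i) (Δ i)) • Δ i }

/-- The geometric Coxeter group `W`: the subgroup of linear automorphisms of `V`
generated by the simple `B`-reflections. -/
def cox (B : LinearMap.BilinForm ℝ V) (Δ : Module.Basis ι ℝ V) : Subgroup (V ≃ₗ[ℝ] V) :=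
  Subgroup.closure (simpleReflections B Δ)

/-- The root system `Φ = W ⬝ Δ`. -/
def Phi (B : LinearMap.BilinForm ℝ V) (Δ : Module.Basis ι ℝ V) : Set V :=
  { ρ | ∃ w ∈ cox B Δ, ∃ i : ι, w (Δ i) = ρ }

/-- The positive roots `Φ⁺ = Φ ∩ cone(Δ)`. -/
def posPhi (B : LinearMap.BilinForm ℝ V) (Δ : Module.Basis ι ℝ V) : Set V :=
  { ρ ∈ Phi B Δ | ∀ i : ι, 0 ≤ Δ.repr ρ i }

/-- `|v|₁`: the sum of the coordinates of `v` in the basis `Δ`. -/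
def l1 (Δ : Module.Basis ι ℝ V) (v : V) : ℝ := ∑ i : ι, Δ.repr v i

/-- The normalization map `v ↦ v̂ = v / |v|₁`. -/
def nrm (Δ : Module.Basis ι ℝ V) (v : V) : V := (l1 Δ v)⁻¹ • v

/-- The set `Φ̂` of normalized roots. -/
def nPhi (B : LinearMap.BilinForm ℝ V) (Δ : Module.Basis ι ℝ V) : Set V :=
  nrm Δ '' posPhi B Δ

/-- `E(Φ)`: the set of accumulation points of the set of normalized roots. -/
def Eset (B : LinearMap.BilinForm ℝ V) (Δ : Module.Basis ι ℝ V) : Set V :=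
  { x | AccPt x (𝓟 (nPhi B Δ)) }

/-- The isotropic cone `Q` of `B`. -/
def isoQ (B : LinearMap.BilinForm ℝ V) : Set V := { v | B v v = 0 }

/-- The affine line through two points `a` and `b`. -/
def lineThrough (a b : V) : Set V := { y : V | ∃ t : ℝ, y = a + t • (b - a) }

/-- The `B`-reflection formula: `s_ρ(x) = x - 2 (B ρ x / B ρ ρ) • ρ`. -/
def reflAt (B : LinearMap.BilinForm ℝ V) (ρ x : V) : V := x - (2 * B ρ x / B ρ ρ) • ρ

/-- Chebyshev-like sequence. -/
def cheb (c : ℝ) : ℕ → ℝ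
  | 0 => 0
  | 1 => 1
  | (n+2) => 2 * c * cheb c (n+1) - cheb c n

lemma cheb_rec (c : ℝ) (n : ℕ) : cheb c (n+2) = 2 * c * cheb c (n+1) - cheb c n := rfl

lemma cheb_ge (c : ℝ) (hc : 1 ≤ c) (n : ℕ) : (n : ℝ) ≤ cheb c n ∧ 1 ≤ cheb c (n+1) - cheb c n := by
  induction n with
  | zero => simp [cheb]
  | succ n ih =>
    obtain ⟨h1, h2⟩ := ih
    have hn : (0:ℝ) ≤ n := Nat.cast_nonneg n
    refine ⟨by push_cast; linarith, ?_⟩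
    have : 0 ≤ (c - 1) * cheb c (n+1) := mul_nonneg (by linarith) (by linarith)
    rw [cheb_rec]; nlinarith

lemma cheb_sin (θ : ℝ) (n : ℕ) : cheb (Real.cos θ) n * Real.sin θ = Real.sin (n * θ) ∧
    cheb (Real.cos θ) (n+1) * Real.sin θ = Real.sin ((n+1) * θ) := by
  induction n with
  | zero => simp [cheb]
  | succ n ih =>
    obtain ⟨h1, h2⟩ := ih
    refine ⟨by push_cast; exact h2, ?_⟩
    rw [cheb_rec]
    have e1 : ((((n+1:ℕ):ℝ)+1) * θ) = (n+1) * θ + θ := by push_cast; ring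
    have e2 : ((n:ℝ) * θ) = (n+1) * θ - θ := by ring
    rw [e1, Real.sin_add]
    rw [e2, Real.sin_sub] at h1
    linear_combination 2 * Real.cos θ * h2 - h1

lemma cheb_eps (c μ : ℝ) (hμ : 1 ≤ μ) (h : μ^2 - 2*c*μ + 1 = 0) (n : ℕ) :
    0 ≤ cheb c (n+1) - μ * cheb c n ∧ cheb c (n+1) - μ * cheb c n ≤ 1 := by
  have hν : (2*c-μ)*μ = 1 := by linarith
  have h0 : 0 ≤ 2*c-μ := by by_contra hh; nlinarith
  have h1 : 2*c-μ ≤ 1 := by nlinarith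
  induction n with
  | zero => simp [cheb]
  | succ n ih =>
    have e : cheb c (n+1+1) - μ * cheb c (n+1) = (2*c-μ) * (cheb c (n+1) - μ * cheb c n) := by
      rw [cheb_rec]; linear_combination (cheb c n) * hν
    rw [e]
    exact ⟨mul_nonneg h0 ih.1, by nlinarith [ih.1, ih.2]⟩

/-- Simple reflection as linear equiv. -/
def srefl (B : LinearMap.BilinForm ℝ V) (Δ : Module.Basis ι ℝ V)
    (hdiag : ∀ i : ι, B (Δ i) (Δ i) = 1) (i : ι) : V ≃ₗ[ℝ] V :=
  LinearEquiv.ofInvolutive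
    (LinearMap.id - (2 • (B (Δ i))).smulRight (Δ i)) (by
      intro u
      simp only [LinearMap.sub_apply, LinearMap.id_apply, LinearMap.smulRight_apply,
        LinearMap.smul_apply, map_sub, map_smul, hdiag, nsmul_eq_mul, smul_eq_mul]
      push_cast
      module)

set_option linter.unusedSectionVars false
set_option linter.unusedSimpArgs false

section
variable {B : LinearMap.BilinForm ℝ V} {Δ : Module.Basis ι ℝ V}
    (hdiag : ∀ i : ι, B (Δ i) (Δ i) = 1)

lemma srefl_apply (i : ι) (u : V) : srefl B Δ hdiag i u = u - (2 * B (Δ i) u) • Δ i := by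
  change u - (2 • (B (Δ i)) u) • Δ i = _
  rw [nsmul_eq_mul]; norm_num

lemma srefl_sq (i : ι) : srefl B Δ hdiag i * srefl B Δ hdiag i = 1 := by
  ext u
  simp only [LinearEquiv.mul_apply, srefl_apply, map_sub, map_smul, hdiag, smul_eq_mul,
    LinearEquiv.coe_one, id]
  module

lemma srefl_inv (i : ι) : (srefl B Δ hdiag i)⁻¹ = srefl B Δ hdiag i :=
  inv_eq_of_mul_eq_one_left (srefl_sq hdiag i)

lemma srefl_mem (i : ι) : srefl B Δ hdiag i ∈ cox B Δ := by
  apply Subgroup.subset_closure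
  exact ⟨i, fun u => by rw [srefl_apply, hdiag, div_one]⟩

/-- product of a word -/
def wprod (L : List ι) : V ≃ₗ[ℝ] V := (L.map (srefl B Δ hdiag)).prod

lemma wprod_append (L M : List ι) : wprod hdiag (L ++ M) = wprod hdiag L * wprod hdiag M := by
  simp [wprod]

lemma wprod_mem (L : List ι) : wprod hdiag L ∈ cox B Δ := by
  apply Subgroup.list_prod_mem
  intro x hx
  obtain ⟨i, _, rfl⟩ := List.mem_map.1 hx
  exact srefl_mem hdiag i

lemma wprod_reverse (L : List ι) : wprod hdiag L.reverse = (wprod hdiag L)⁻¹ := by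
  induction L with
  | nil => simp [wprod]
  | cons a L ih =>
    rw [List.reverse_cons, wprod_append, ih]
    simp [wprod, srefl_inv]

lemma exists_word {w : V ≃ₗ[ℝ] V} (hw : w ∈ cox B Δ) : ∃ L : List ι, wprod hdiag L = w := by
  induction hw using Subgroup.closure_induction with
  | mem x hx =>
    obtain ⟨i, hi⟩ := hx
    refine ⟨[i], ?_⟩
    ext u
    simp [wprod, srefl_apply, hi, hdiag]
  | one => exact ⟨[], by simp [wprod]⟩
  | mul x y _ _ hx hy =>
    obtain ⟨L, rfl⟩ := hx
    obtain ⟨M, rfl⟩ := hy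
    exact ⟨L ++ M, wprod_append hdiag L M⟩
  | inv x _ hx =>
    obtain ⟨L, rfl⟩ := hx
    exact ⟨L.reverse, wprod_reverse hdiag L⟩

/-- length -/
def wlen (w : V ≃ₗ[ℝ] V) : ℕ := sInf {n | ∃ L : List ι, L.length = n ∧ wprod hdiag L = w}

lemma wlen_spec {w : V ≃ₗ[ℝ] V} (hw : w ∈ cox B Δ) :
    ∃ L : List ι, L.length = wlen hdiag w ∧ wprod hdiag L = w := by
  obtain ⟨L, hL⟩ := exists_word hdiag hw
  exact Nat.sInf_mem (s := {n | ∃ L : List ι, L.length = n ∧ wprod hdiag L = w}) ⟨_, L, rfl, hL⟩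

lemma wlen_le (L : List ι) : wlen hdiag (wprod hdiag L) ≤ L.length :=
  Nat.sInf_le ⟨L, rfl, rfl⟩

lemma wlen_mul_word {w : V ≃ₗ[ℝ] V} (hw : w ∈ cox B Δ) (L : List ι) :
    wlen hdiag (w * wprod hdiag L) ≤ wlen hdiag w + L.length := by
  obtain ⟨M, hM, rfl⟩ := wlen_spec hdiag hw
  rw [← hM, ← wprod_append, ← List.length_append]
  exact wlen_le hdiag _

lemma wlen_mul_s {w : V ≃ₗ[ℝ] V} (hw : w ∈ cox B Δ) (i : ι) :
    wlen hdiag (w * srefl B Δ hdiag i) ≤ wlen hdiag w + 1 := by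
  have := wlen_mul_word hdiag hw [i]
  simpa [wprod] using this

lemma cox_isom (hdiag : ∀ i : ι, B (Δ i) (Δ i) = 1)
    (hsymm : ∀ u v : V, B u v = B v u) {w : V ≃ₗ[ℝ] V} (hw : w ∈ cox B Δ) (u v : V) :
    B (w u) (w v) = B u v := by
  obtain ⟨L, rfl⟩ := exists_word hdiag hw
  induction L generalizing u v with
  | nil => simp [wprod]
  | cons a L ih =>
    have e : ∀ u, wprod hdiag (a :: L) u = srefl B Δ hdiag a (wprod hdiag L u) := by
      intro u; simp [wprod]
    rw [e, e, ← ih u v (wprod_mem hdiag L)]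
    simp only [srefl_apply, map_sub, map_smul, LinearMap.sub_apply, LinearMap.smul_apply,
      smul_eq_mul, hdiag]
    rw [hsymm _ (Δ a)]
    ring

/-- alternating letters -/
def alt (s t : ι) (n : ℕ) : ι := if Even n then s else t

lemma alt_succ (s t : ι) (n : ℕ) : alt s t (n+1) = alt t s n := by
  simp only [alt, Nat.even_add_one]; split_ifs <;> simp_all

/-- alternating word of length n ending in t -/
def aw (s t : ι) : ℕ → List ι
  | 0 => []
  | n+1 => alt t s n :: aw s t n

lemma aw_length (s t : ι) (n : ℕ) : (aw s t n).length = n := by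
  induction n with
  | zero => rfl
  | succ n ih => simp [aw, ih]

lemma alt_B (hsymm : ∀ u v : V, B u v = B v u) (s t : ι) (n : ℕ) :
    B (Δ (alt t s n)) (Δ (alt s t n)) = B (Δ s) (Δ t) := by
  unfold alt; split_ifs
  · exact hsymm _ _
  · rfl

lemma aw_apply (hsymm : ∀ u v : V, B u v = B v u) (s t : ι) (n : ℕ) :
    wprod hdiag (aw s t n) (Δ s) = cheb (-B (Δ s) (Δ t)) (n+1) • Δ (alt s t n)
      + cheb (-B (Δ s) (Δ t)) n • Δ (alt t s n) := by
  induction n with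
  | zero => simp [aw, wprod, cheb, alt]
  | succ n ih =>
    have e : wprod hdiag (aw s t (n+1)) (Δ s)
      = srefl B Δ hdiag (alt t s n) (wprod hdiag (aw s t n) (Δ s)) := by simp [wprod, aw]
    rw [e, ih, srefl_apply, cheb_rec, alt_succ, alt_succ]
    simp only [map_add, map_smul, hdiag, smul_eq_mul, alt_B hsymm]
    module

/-- nonneg coords -/
def Nn (Δ : Module.Basis ι ℝ V) (v : V) : Prop := ∀ i, 0 ≤ Δ.repr v i

lemma Nn_comb {u v : V} (hu : Nn Δ u) (hv : Nn Δ v) {a b : ℝ} (ha : 0 ≤ a) (hb : 0 ≤ b) :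
    Nn Δ (a • u + b • v) := by
  intro i
  have := mul_nonneg ha (hu i)
  have := mul_nonneg hb (hv i)
  simp; linarith

lemma srefl_conj (hsymm : ∀ u v : V, B u v = B v u) {g : V ≃ₗ[ℝ] V} (hg : g ∈ cox B Δ) (s r : ι)
    (h : g (Δ s) = Δ r) : g * srefl B Δ hdiag s = srefl B Δ hdiag r * g := by
  ext u
  simp only [LinearEquiv.mul_apply, srefl_apply, map_sub, map_smul, h]
  rw [← cox_isom hdiag hsymm hg (Δ s) u, h]

/-- the descending coset sequence -/
lemma key (hsymm : ∀ u v : V, B u v = B v u)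
    (hoff : ∀ i j : ι, i ≠ j → B (Δ i) (Δ j) ≤ -1 ∨
      ∃ k : ℕ, 2 ≤ k ∧ B (Δ i) (Δ j) = -Real.cos (Real.pi / (k : ℝ)))
    (N : ℕ) : ∀ (w : V ≃ₗ[ℝ] V), w ∈ cox B Δ → wlen hdiag w = N → ∀ s : ι,
      wlen hdiag w ≤ wlen hdiag (w * srefl B Δ hdiag s) → Nn Δ (w (Δ s)) := by
  classical
  induction N using Nat.strong_induction_on with
  | _ N IH =>
  intro w hw hN s hs
  obtain ⟨L, hL, hLw⟩ := wlen_spec hdiag hw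
  rcases List.eq_nil_or_concat L with rfl | ⟨M, t, rfl⟩
  · rw [← hLw]
    intro i
    simp only [wprod, List.map_nil, List.prod_nil, LinearEquiv.coe_one, id, Module.Basis.repr_self]
    rw [Finsupp.single_apply]; split_ifs <;> norm_num
  · -- last letter t
    have hMw : wprod hdiag M = w * srefl B Δ hdiag t := by
      rw [← hLw, List.concat_eq_append, wprod_append, mul_assoc]
      simp [wprod, srefl_sq]
    have hlt : wlen hdiag (w * srefl B Δ hdiag t) + 1 ≤ wlen hdiag w := by
      rw [← hMw, ← hL]
      have := wlen_le hdiag M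
      simp; omega
    have hst : s ≠ t := by rintro rfl; omega
    set W : ℕ → (V ≃ₗ[ℝ] V) := fun k => w * (wprod hdiag (aw s t k))⁻¹ with hW
    have hWm : ∀ k, W k ∈ cox B Δ := fun k => mul_mem hw (inv_mem (wprod_mem hdiag _))
    have hWw : ∀ k, W k * wprod hdiag (aw s t k) = w := fun k => by simp [hW]
    have hWs : ∀ k, W (k+1) = W k * srefl B Δ hdiag (alt t s k) := fun k => by
      have : wprod hdiag (aw s t (k+1)) = srefl B Δ hdiag (alt t s k) * wprod hdiag (aw s t k) := by
        simp [aw, wprod]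
      simp only [hW, this, mul_inv_rev, srefl_inv, mul_assoc]
    have hWs' : ∀ k, W k = W (k+1) * srefl B Δ hdiag (alt t s k) := fun k => by
      rw [hWs, mul_assoc, srefl_sq, mul_one]
    have hlow : ∀ k, wlen hdiag w ≤ wlen hdiag (W k) + k := fun k => by
      have := wlen_mul_word hdiag (hWm k) (aw s t k)
      rwa [hWw, aw_length] at this
    have hC1 : wlen hdiag (W 1) + 1 ≤ wlen hdiag w := by
      rw [hWs 0]; simpa [hW, aw, wprod, alt] using hlt
    -- maximal k
    obtain ⟨k, hk1, hCk, hCk'⟩ : ∃ k, 1 ≤ k ∧ wlen hdiag (W k) + k ≤ wlen hdiag w ∧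
        ¬ (wlen hdiag (W (k+1)) + (k+1) ≤ wlen hdiag w) := by
      by_contra! hcon
      have : ∀ k, wlen hdiag (W (k+1)) + (k+1) ≤ wlen hdiag w := by
        intro k
        induction k with
        | zero => exact hC1
        | succ k ih => exact hcon (k+1) (by omega) ih
      have := this (wlen hdiag w); omega
    have hdown : ∀ d, d ≤ k → wlen hdiag (W (k-d)) + (k-d) ≤ wlen hdiag w := by
      intro d
      induction d with
      | zero => intro _; exact hCk
      | succ d ih =>
        intro hd
        have h1 := ih (by omega)
        have h2 := wlen_mul_s hdiag (hWm (k-(d+1)+1)) (alt t s (k-(d+1)))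
        rw [← hWs'] at h2
        have e : k-(d+1)+1 = k-d := by omega
        rw [e] at h2
        omega
    have hy : Nn Δ (W k (Δ (alt t s k))) := by
      refine IH _ (by omega) (W k) (hWm k) rfl _ ?_
      rw [← hWs]; omega
    have hx : Nn Δ (W k (Δ (alt s t k))) := by
      refine IH _ (by omega) (W k) (hWm k) rfl _ ?_
      obtain ⟨j, rfl⟩ : ∃ j, k = j+1 := ⟨k-1, by omega⟩
      rw [alt_succ, ← hWs']
      have := hlow j; omega
    have hwa : w (Δ s) = cheb (-B (Δ s) (Δ t)) (k+1) • W k (Δ (alt s t k))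
      + cheb (-B (Δ s) (Δ t)) k • W k (Δ (alt t s k)) := by
      conv_lhs => rw [← hWw k]
      rw [LinearEquiv.mul_apply, aw_apply hdiag hsymm, map_add, map_smul, map_smul]
    rw [hwa]
    rcases hoff s t hst with hc | ⟨m, hm, hc⟩
    · have h1 := (cheb_ge (-B (Δ s) (Δ t)) (by linarith) k).1
      have h2 := (cheb_ge (-B (Δ s) (Δ t)) (by linarith) (k+1)).1
      exact Nn_comb hx hy (le_trans (Nat.cast_nonneg _) h2) (le_trans (Nat.cast_nonneg _) h1)
    · rw [hc, neg_neg]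
      set θ := Real.pi / (m:ℝ) with hθ
      have hm0 : (2:ℝ) ≤ m := by exact_mod_cast hm
      have hθ0 : 0 < θ := div_pos Real.pi_pos (by linarith)
      have hmθ : m * θ = Real.pi := by rw [hθ]; field_simp
      have hsin : 0 < Real.sin θ := Real.sin_pos_of_pos_of_lt_pi hθ0 (by nlinarith)
      rcases lt_or_ge k m with hkm | hkm
      · have hkm' : (k:ℝ)+1 ≤ m := by exact_mod_cast hkm
        have hk0 : (0:ℝ) ≤ k := Nat.cast_nonneg _
        obtain ⟨h1, h2⟩ := cheb_sin θ k
        have g1 : 0 ≤ Real.sin (k*θ) :=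
          Real.sin_nonneg_of_nonneg_of_le_pi (by positivity) (by nlinarith)
        have g2 : 0 ≤ Real.sin ((k+1)*θ) :=
          Real.sin_nonneg_of_nonneg_of_le_pi (by positivity) (by nlinarith)
        rw [← h1] at g1
        rw [← h2] at g2
        exact Nn_comb hx hy (nonneg_of_mul_nonneg_left g2 hsin) (nonneg_of_mul_nonneg_left g1 hsin)
      · exfalso
        obtain ⟨j, rfl⟩ : ∃ j, m = j+1 := ⟨m-1, by omega⟩
        obtain ⟨h1, h2⟩ := cheb_sin θ j
        push_cast at hmθ
        have e1 : (j:ℝ) * θ = Real.pi - θ := by linarith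
        rw [hmθ, Real.sin_pi] at h2
        rw [e1, Real.sin_pi_sub] at h1
        have p1 : cheb (Real.cos θ) j = 1 := by
          have : (cheb (Real.cos θ) j - 1) * Real.sin θ = 0 := by linarith
          rcases mul_eq_zero.1 this with h | h <;> linarith
        have p2 : cheb (Real.cos θ) (j+1) = 0 := by
          rcases mul_eq_zero.1 h2 with h | h <;> linarith
        have ha := aw_apply hdiag hsymm s t j
        rw [hc, neg_neg, p1, p2, zero_smul, one_smul, zero_add] at ha
        have hconj := srefl_conj hdiag hsymm (wprod_mem hdiag _) _ _ ha
        have hws : w * srefl B Δ hdiag s = W (j+1) * wprod hdiag (aw s t j) := by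
          rw [hWs j, mul_assoc, ← hconj, ← mul_assoc, hWw]
        have hd := hdown (k-(j+1)) (by omega)
        have e : k - (k-(j+1)) = j+1 := by omega
        rw [e] at hd
        have hl := wlen_mul_word hdiag (hWm (j+1)) (aw s t j)
        rw [← hws, aw_length] at hl
        omega

lemma root_sign (hdiag : ∀ i : ι, B (Δ i) (Δ i) = 1)
    (hsymm : ∀ u v : V, B u v = B v u)
    (hoff : ∀ i j : ι, i ≠ j → B (Δ i) (Δ j) ≤ -1 ∨
      ∃ k : ℕ, 2 ≤ k ∧ B (Δ i) (Δ j) = -Real.cos (Real.pi / (k : ℝ)))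
    {ρ : V} (h : ρ ∈ Phi B Δ) : Nn Δ ρ ∨ Nn Δ (-ρ) := by
  obtain ⟨w, hw, i, rfl⟩ := h
  rcases le_total (wlen hdiag w) (wlen hdiag (w * srefl B Δ hdiag i)) with h | h
  · exact Or.inl (key hdiag hsymm hoff _ w hw rfl i h)
  · right
    have := key hdiag hsymm hoff _ (w * srefl B Δ hdiag i) (mul_mem hw (srefl_mem hdiag i)) rfl i
      (by rwa [mul_assoc, srefl_sq, mul_one])
    convert this using 1
    rw [LinearEquiv.mul_apply, srefl_apply, hdiag, ← map_neg]
    congr 1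
    module

lemma root_norm (hdiag : ∀ i : ι, B (Δ i) (Δ i) = 1)
    (hsymm : ∀ u v : V, B u v = B v u) {ρ : V} (h : ρ ∈ Phi B Δ) : B ρ ρ = 1 := by
  obtain ⟨w, hw, i, rfl⟩ := h
  rw [cox_isom hdiag hsymm hw, hdiag]

lemma root_map {ρ : V} (h : ρ ∈ Phi B Δ) {w : V ≃ₗ[ℝ] V} (hw : w ∈ cox B Δ) : w ρ ∈ Phi B Δ := by
  obtain ⟨v, hv, i, rfl⟩ := h
  exact ⟨w * v, mul_mem hw hv, i, rfl⟩

lemma root_refl (hdiag : ∀ i : ι, B (Δ i) (Δ i) = 1)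
    (hsymm : ∀ u v : V, B u v = B v u) {ρ σ : V} (h : ρ ∈ Phi B Δ)
    (h' : σ ∈ Phi B Δ) : σ - (2 * B ρ σ) • ρ ∈ Phi B Δ := by
  obtain ⟨w, hw, i, rfl⟩ := h
  have := root_map h' (mul_mem (mul_mem hw (srefl_mem hdiag i)) (inv_mem hw))
  convert this using 1
  have e : w (w⁻¹ σ) = σ := by rw [← LinearEquiv.mul_apply]; simp
  rw [LinearEquiv.mul_apply, LinearEquiv.mul_apply, srefl_apply, map_sub, map_smul, e,
    ← cox_isom hdiag hsymm hw (Δ i), e]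

lemma root_neg (hdiag : ∀ i : ι, B (Δ i) (Δ i) = 1)
    (hsymm : ∀ u v : V, B u v = B v u) {ρ : V} (h : ρ ∈ Phi B Δ) : -ρ ∈ Phi B Δ := by
  have := root_refl hdiag hsymm h h
  rw [root_norm hdiag hsymm h] at this
  convert this using 1
  module

lemma root_seq (hdiag : ∀ i : ι, B (Δ i) (Δ i) = 1)
    (hsymm : ∀ u v : V, B u v = B v u) {ρ₁ ρ₂ : V} (h1 : ρ₁ ∈ Phi B Δ)
    (h2 : ρ₂ ∈ Phi B Δ) (n : ℕ) :
    let p := cheb (B ρ₁ ρ₂)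
    (p (n+1) • ρ₂ - p n • ρ₁ ∈ Phi B Δ) ∧ (p (n+2) • ρ₂ - p (n+1) • ρ₁ ∈ Phi B Δ) ∧
      B (p (n+2) • ρ₂ - p (n+1) • ρ₁) (p (n+1) • ρ₂ - p n • ρ₁) = B ρ₁ ρ₂ := by
  intro p
  have n1 := root_norm hdiag hsymm h1
  have n2 := root_norm hdiag hsymm h2
  induction n with
  | zero =>
    have := root_neg hdiag hsymm (root_refl hdiag hsymm h2 h1)
    rw [hsymm ρ₂ ρ₁] at this
    refine ⟨by simpa [p, cheb] using h2, by simpa [p, cheb] using this, ?_⟩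
    simp [p, cheb, n2]; ring
  | succ n ih =>
    obtain ⟨a, b, c⟩ := ih
    have e : p (n+1+2) • ρ₂ - p (n+1+1) • ρ₁ =
      -((p (n+1) • ρ₂ - p n • ρ₁) - (2 * B ρ₁ ρ₂) • (p (n+2) • ρ₂ - p (n+1) • ρ₁)) := by
      simp only [p, cheb_rec]; module
    have hb := root_norm hdiag hsymm b
    refine ⟨b, ?_, ?_⟩
    · rw [e]
      apply root_neg hdiag hsymm
      have := root_refl hdiag hsymm b a
      rwa [c] at this
    · rw [e]
      generalize hR : p (n+2) • ρ₂ - p (n+1) • ρ₁ = R at *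
      generalize p (n+1) • ρ₂ - p n • ρ₁ = S at *
      simp only [map_neg, map_sub, map_smul, LinearMap.neg_apply, LinearMap.sub_apply,
        LinearMap.smul_apply, smul_eq_mul, hb, hsymm S R, c]
      ring

lemma iso_sign0 (hdiag : ∀ i : ι, B (Δ i) (Δ i) = 1)
    (hsymm : ∀ u v : V, B u v = B v u)
    (hoff : ∀ i j : ι, i ≠ j → B (Δ i) (Δ j) ≤ -1 ∨
      ∃ k : ℕ, 2 ≤ k ∧ B (Δ i) (Δ j) = -Real.cos (Real.pi / (k : ℝ)))
    {ρ₁ ρ₂ : V} (h1 : ρ₁ ∈ Phi B Δ) (h2 : ρ₂ ∈ Phi B Δ) (μ : ℝ) (hμ : 1 ≤ μ)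
    (h : μ^2 - 2 * B ρ₁ ρ₂ * μ + 1 = 0) : Nn Δ (μ • ρ₂ - ρ₁) ∨ Nn Δ (-(μ • ρ₂ - ρ₁)) := by
  by_contra! hcon
  obtain ⟨ha, hb⟩ := hcon
  simp only [Nn, not_forall, not_le] at ha hb
  obtain ⟨i, hi⟩ := ha
  obtain ⟨j, hj⟩ := hb
  have hc : 1 ≤ B ρ₁ ρ₂ := by by_contra hh; nlinarith [sq_nonneg (μ-1)]
  set y := μ • ρ₂ - ρ₁ with hy
  rw [map_neg, Finsupp.neg_apply] at hj
  obtain ⟨n, hn⟩ := exists_nat_gt (max (|Δ.repr ρ₂ i| / -(Δ.repr y i)) (|Δ.repr ρ₂ j| / (Δ.repr y j)))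
  have hn1 := lt_of_le_of_lt (le_max_left _ _) hn
  have hn2 := lt_of_le_of_lt (le_max_right _ _) hn
  rw [div_lt_iff₀ (by linarith)] at hn1 hn2
  have hp := (cheb_ge _ hc n).1
  obtain ⟨e0, e1⟩ := cheb_eps _ μ hμ h n
  have hr := (root_seq hdiag hsymm h1 h2 n).1
  set p := cheb (B ρ₁ ρ₂) n
  set ε := cheb (B ρ₁ ρ₂) (n+1) - μ * p with hε
  have er : cheb (B ρ₁ ρ₂) (n+1) • ρ₂ - p • ρ₁ = p • y + ε • ρ₂ := by
    rw [hy, hε]; module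
  rw [er] at hr
  have bd : ∀ z : ℝ, -|z| ≤ ε * z ∧ ε * z ≤ |z| := by
    intro z
    apply abs_le.1
    rw [abs_mul, abs_of_nonneg e0]
    exact mul_le_of_le_one_left (abs_nonneg _) e1
  have b1 := bd (Δ.repr ρ₂ i)
  have b2 := bd (Δ.repr ρ₂ j)
  rcases root_sign hdiag hsymm hoff hr with hs | hs
  · have := hs i
    simp only [map_add, map_smul, Finsupp.add_apply, Finsupp.smul_apply, smul_eq_mul] at this
    nlinarith
  · have := hs j
    simp only [map_neg, Finsupp.neg_apply, map_add, map_smul, Finsupp.add_apply, Finsupp.smul_apply, smul_eq_mul] at this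
    nlinarith

lemma Nn_smul {y : V} (a : ℝ) (h : Nn Δ y ∨ Nn Δ (-y)) : Nn Δ (a • y) ∨ Nn Δ (-(a • y)) := by
  have key : ∀ (a : ℝ) (y : V), 0 ≤ a → Nn Δ y → Nn Δ (a • y) := by
    intro a y ha hy i
    rw [map_smul, Finsupp.smul_apply, smul_eq_mul]
    exact mul_nonneg ha (hy i)
  rcases le_total 0 a with ha | ha <;> rcases h with h | h
  · exact Or.inl (key _ _ ha h)
  · right; rw [← smul_neg]; exact key _ _ ha h
  · right; rw [← neg_smul]; exact key _ _ (by linarith) h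
  · left; rw [← neg_smul_neg]; exact key _ _ (by linarith) h

lemma iso_sign (hdiag : ∀ i : ι, B (Δ i) (Δ i) = 1)
    (hsymm : ∀ u v : V, B u v = B v u)
    (hoff : ∀ i j : ι, i ≠ j → B (Δ i) (Δ j) ≤ -1 ∨
      ∃ k : ℕ, 2 ≤ k ∧ B (Δ i) (Δ j) = -Real.cos (Real.pi / (k : ℝ)))
    {ρ₁ ρ₂ : V} (h1 : ρ₁ ∈ Phi B Δ) (h2 : ρ₂ ∈ Phi B Δ) (a b : ℝ)
    (h : B (a • ρ₁ + b • ρ₂) (a • ρ₁ + b • ρ₂) = 0) :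
    Nn Δ (a • ρ₁ + b • ρ₂) ∨ Nn Δ (-(a • ρ₁ + b • ρ₂)) := by
  -- assume |a| ≤ |b|
  wlog hab : |a| ≤ |b| generalizing a b ρ₁ ρ₂
  · rw [add_comm] at h ⊢
    exact this h2 h1 b a h (le_of_not_ge hab)
  have n1 := root_norm hdiag hsymm h1
  have n2 := root_norm hdiag hsymm h2
  have h' : a^2 + b^2 + 2*a*b*B ρ₁ ρ₂ = 0 := by
    simp only [map_add, map_smul, LinearMap.add_apply, LinearMap.smul_apply, smul_eq_mul,
      hsymm ρ₂ ρ₁, n1, n2] at h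
    linarith
  by_cases ha : a = 0
  · subst ha
    have : b = 0 := by nlinarith
    subst this
    left; intro i; simp
  -- replace ρ₂ by its negative if necessary
  wlog hs : a * b ≤ 0 generalizing b ρ₂
  · have := this (root_neg hdiag hsymm h2) (-b) (by simpa using h) (by simpa using hab)
      (by simpa using n2) (by simp; linarith) (by linarith)
    simpa using this
  have hμ : 1 ≤ -b/a := by
    have : |a| ≤ |b| := hab
    rcases lt_or_gt_of_ne ha with h0 | h0
    · have hb : 0 ≤ b := by by_contra hh; nlinarith
      rw [abs_of_neg h0, abs_of_nonneg hb] at this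
      rw [le_div_iff_of_neg h0]; linarith
    · have hb : b ≤ 0 := by by_contra hh; nlinarith
      rw [abs_of_pos h0, abs_of_nonpos hb] at this
      rw [le_div_iff₀ h0]; linarith
  have := iso_sign0 hdiag hsymm hoff h1 h2 (-b/a) hμ (by field_simp; linarith)
  have := Nn_smul (-a) this
  have e : (-a) • ((-b/a) • ρ₂ - ρ₁) = a • ρ₁ + b • ρ₂ := by
    rw [smul_sub, smul_smul]
    have : -a * (-b/a) = b := by field_simp
    rw [this]; module
  rwa [e] at this

lemma l1_ne {v : V} (h : Nn Δ v ∨ Nn Δ (-v)) (hv : v ≠ 0) : l1 Δ v ≠ 0 := by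
  have key : ∀ v : V, Nn Δ v → l1 Δ v = 0 → v = 0 := by
    intro v hn h0
    have := (Finset.sum_eq_zero_iff_of_nonneg (fun i _ => hn i)).1 h0
    apply Δ.repr.injective
    ext i
    simpa using this i (Finset.mem_univ i)
  intro h0
  rcases h with h | h
  · exact hv (key v h h0)
  · refine hv (neg_eq_zero.1 (key (-v) h ?_))
    simp [l1] at h0 ⊢
    exact h0

lemma l1_comb (a b : ℝ) (u v : V) : l1 Δ (a • u + b • v) = a * l1 Δ u + b * l1 Δ v := by
  simp [l1, Finset.sum_add_distrib, Finset.mul_sum]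

lemma root_l1 (hdiag : ∀ i : ι, B (Δ i) (Δ i) = 1)
    (hsymm : ∀ u v : V, B u v = B v u)
    (hoff : ∀ i j : ι, i ≠ j → B (Δ i) (Δ j) ≤ -1 ∨
      ∃ k : ℕ, 2 ≤ k ∧ B (Δ i) (Δ j) = -Real.cos (Real.pi / (k : ℝ)))
    {ρ : V} (h : ρ ∈ Phi B Δ) : l1 Δ ρ ≠ 0 := by
  refine l1_ne (root_sign hdiag hsymm hoff h) ?_
  rintro rfl
  have := root_norm hdiag hsymm h
  simp at this

end

/-- Let `ρ₁ ≠ ρ₂` be roots, `x ∈ L(ρ̂₁,ρ̂₂) ∩ Q` and `w ∈ W`.  Then `w(x) ∉ V₀`, and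
`w·x ∈ L(w·ρ̂₁, w·ρ̂₂) ∩ Q`. -/
theorem statement12 (B : LinearMap.BilinForm ℝ V) (Δ : Module.Basis ι ℝ V)
    (hsymm : ∀ u v : V, B u v = B v u)
    (hdiag : ∀ i : ι, B (Δ i) (Δ i) = 1)
    (hoff : ∀ i j : ι, i ≠ j → B (Δ i) (Δ j) ≤ -1 ∨
      ∃ k : ℕ, 2 ≤ k ∧ B (Δ i) (Δ j) = -Real.cos (Real.pi / (k : ℝ)))
    (ρ₁ ρ₂ : V) (h1 : ρ₁ ∈ Phi B Δ) (h2 : ρ₂ ∈ Phi B Δ) (hne : ρ₁ ≠ ρ₂)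
    (x : V) (hxL : x ∈ lineThrough (nrm Δ ρ₁) (nrm Δ ρ₂)) (hxQ : B x x = 0)
    (w : V ≃ₗ[ℝ] V) (hw : w ∈ cox B Δ) :
    l1 Δ (w x) ≠ 0 ∧
    nrm Δ (w x) ∈ lineThrough (nrm Δ (w ρ₁)) (nrm Δ (w ρ₂)) ∩ isoQ B := by
  obtain ⟨t, rfl⟩ := hxL
  have l1' := root_l1 hdiag hsymm hoff h1
  have l2' := root_l1 hdiag hsymm hoff h2
  have m1 := root_l1 hdiag hsymm hoff (root_map h1 hw)
  have m2 := root_l1 hdiag hsymm hoff (root_map h2 hw)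
  have ex : nrm Δ ρ₁ + t • (nrm Δ ρ₂ - nrm Δ ρ₁)
      = ((1-t) * (l1 Δ ρ₁)⁻¹) • ρ₁ + (t * (l1 Δ ρ₂)⁻¹) • ρ₂ := by
    unfold nrm; module
  rw [ex] at hxQ ⊢
  set a := (1-t) * (l1 Δ ρ₁)⁻¹ with ha
  set b := t * (l1 Δ ρ₂)⁻¹ with hb
  have hlx : l1 Δ (a • ρ₁ + b • ρ₂) = 1 := by
    rw [l1_comb, ha, hb]; field_simp; ring
  have hx0 : a • ρ₁ + b • ρ₂ ≠ 0 := by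
    intro h; rw [h] at hlx; simp [l1] at hlx
  have hwQ : B (w (a • ρ₁ + b • ρ₂)) (w (a • ρ₁ + b • ρ₂)) = 0 := by
    rw [cox_isom hdiag hsymm hw, hxQ]
  have hw0 : w (a • ρ₁ + b • ρ₂) ≠ 0 := fun h => hx0 (w.map_eq_zero_iff.1 h)
  rw [map_add, map_smul, map_smul] at hwQ hw0 ⊢
  have hL := l1_ne (iso_sign hdiag hsymm hoff (root_map h1 hw) (root_map h2 hw) a b hwQ) hw0
  refine ⟨hL, ⟨b * l1 Δ (w ρ₂) / l1 Δ (a • w ρ₁ + b • w ρ₂), ?_⟩, ?_⟩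
  · unfold nrm
    have hLe := l1_comb (Δ := Δ) a b (w ρ₁) (w ρ₂)
    generalize l1 Δ (a • w ρ₁ + b • w ρ₂) = L at *
    have e1 : L⁻¹ * a = (1 - b * l1 Δ (w ρ₂) / L) * (l1 Δ (w ρ₁))⁻¹ := by
      field_simp; linarith
    have e2 : L⁻¹ * b = (b * l1 Δ (w ρ₂) / L) * (l1 Δ (w ρ₂))⁻¹ := by
      field_simp
    rw [smul_add, smul_smul, smul_smul, e1, e2]
    module
  · show B _ _ = 0
    unfold nrm
    rw [map_smul, map_smul, LinearMap.smul_apply, hwQ]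
    simp
end
end

section
/- Say that a point x ∈ Q̂ is visible from v ∈ V₁ if the closed segment [v,x] intersects Q only in x. Let x ∈ E(Φ) and ρ ∈ Φ. Then: (i) x is visible from ρ̂ if and only if B(ρ̂, x) ≥ 0; (ii) if ρ ∈ Φ⁺, then x is visible from ρ̂ if and only if B(ρ, x) ≥ 0; (iii) if ρ ∈ Φ⁺ and w ∈ W satisfies w(ρ) ∈ Φ⁺, then x is visible from ρ̂ if and only if w·x is visible from w·ρ̂. -/
open Filter Topology

noncomputable section

variable {ι V : Type*} [Fintype ι] [NormedAddCommGroup V] [NormedSpace ℝ V]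

/-- `x ∈ Q̂` is visible from `v ∈ V₁` if the closed segment `[v,x]` meets `Q` only
in `x`. -/
def visible (B : LinearMap.BilinForm ℝ V) (x v : V) : Prop :=
  segment ℝ v x ∩ isoQ B = {x}

set_option linter.unusedSectionVars false

structure Ctx (B : LinearMap.BilinForm ℝ V) (Δ : Module.Basis ι ℝ V) (s : ι → V ≃ₗ[ℝ] V) :
    Prop where
  symm : ∀ u v : V, B u v = B v u
  diag : ∀ i : ι, B (Δ i) (Δ i) = 1
  off : ∀ i j : ι, i ≠ j → B (Δ i) (Δ j) ≤ -1 ∨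
      ∃ k : ℕ, 2 ≤ k ∧ B (Δ i) (Δ j) = -Real.cos (Real.pi / (k : ℝ))
  hs : ∀ i u, s i u = u - (2 * B (Δ i) u) • Δ i

variable {B : LinearMap.BilinForm ℝ V} {Δ : Module.Basis ι ℝ V} {s : ι → V ≃ₗ[ℝ] V}

theorem exists_ctx (hsymm : ∀ u v : V, B u v = B v u)
    (hdiag : ∀ i : ι, B (Δ i) (Δ i) = 1)
    (hoff : ∀ i j : ι, i ≠ j → B (Δ i) (Δ j) ≤ -1 ∨
      ∃ k : ℕ, 2 ≤ k ∧ B (Δ i) (Δ j) = -Real.cos (Real.pi / (k : ℝ))) :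
    ∃ s, Ctx B Δ s := by
  have h : ∀ i, ((2 : ℝ) • B (Δ i)) (Δ i) = 2 := by intro i; simp [hdiag]
  refine ⟨fun i => Module.reflection (h i), hsymm, hdiag, hoff, ?_⟩
  intro i u
  simp [Module.reflection_apply]

namespace Ctx

theorem s_self (c : Ctx B Δ s) (i : ι) : s i (Δ i) = - Δ i := by
  rw [c.hs, c.diag]; module

theorem s_s (c : Ctx B Δ s) (i : ι) (u : V) : s i (s i u) = u := by
  rw [c.hs i u, map_sub, map_smul, c.s_self, c.hs]; module

theorem s_mul (c : Ctx B Δ s) (i : ι) : s i * s i = 1 := by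
  ext u; exact c.s_s i u

theorem s_inv (c : Ctx B Δ s) (i : ι) : (s i)⁻¹ = s i := inv_eq_of_mul_eq_one_left (c.s_mul i)

theorem simple_eq (c : Ctx B Δ s) : simpleReflections B Δ = Set.range s := by
  ext e
  constructor
  · rintro ⟨i, h⟩
    refine ⟨i, ?_⟩
    ext u
    rw [h, c.hs, c.diag, div_one]
  · rintro ⟨i, rfl⟩
    exact ⟨i, fun u => by rw [c.hs, c.diag, div_one]⟩

theorem s_mem (c : Ctx B Δ s) (i : ι) : s i ∈ cox B Δ :=
  Subgroup.subset_closure (by rw [c.simple_eq]; exact ⟨i, rfl⟩)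

theorem prod_mem (c : Ctx B Δ s) (l : List ι) : (l.map s).prod ∈ cox B Δ := by
  apply Subgroup.list_prod_mem
  intro x hx
  obtain ⟨i, _, rfl⟩ := List.mem_map.1 hx
  exact c.s_mem i

theorem exists_list (c : Ctx B Δ s) {w : V ≃ₗ[ℝ] V} (hw : w ∈ cox B Δ) :
    ∃ l : List ι, (l.map s).prod = w := by
  unfold cox at hw
  rw [c.simple_eq] at hw
  induction hw using Subgroup.closure_induction with
  | mem x h => obtain ⟨i, rfl⟩ := h; exact ⟨[i], by simp⟩
  | one => exact ⟨[], by simp⟩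
  | mul x y _ _ hx hy =>
    obtain ⟨l, rfl⟩ := hx
    obtain ⟨l', rfl⟩ := hy
    exact ⟨l ++ l', by simp⟩
  | inv x _ hx =>
    obtain ⟨l, rfl⟩ := hx
    refine ⟨l.reverse, ?_⟩
    rw [List.prod_inv_reverse, List.map_reverse, List.map_map]
    congr 2
    apply List.map_congr_left
    intro i _
    exact (c.s_inv i).symm

theorem list_induction (c : Ctx B Δ s) {P : (V ≃ₗ[ℝ] V) → Prop} (h1 : P 1)
    (h2 : ∀ i w, w ∈ cox B Δ → P w → P (s i * w)) {w : V ≃ₗ[ℝ] V} (hw : w ∈ cox B Δ) : P w := by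
  obtain ⟨l, rfl⟩ := c.exists_list hw
  clear hw
  induction l with
  | nil => simpa using h1
  | cons i l ih => simpa using h2 i _ (c.prod_mem l) ih

theorem inv_B (c : Ctx B Δ s) {w : V ≃ₗ[ℝ] V} (hw : w ∈ cox B Δ) (u v : V) :
    B (w u) (w v) = B u v := by
  refine c.list_induction (P := fun w => B (w u) (w v) = B u v) ?_ ?_ hw
  · simp
  · intro i w _ ih
    rw [← ih, LinearEquiv.mul_apply, LinearEquiv.mul_apply, c.hs, c.hs]
    simp only [map_sub, map_smul, LinearMap.sub_apply, LinearMap.smul_apply, smul_eq_mul, c.diag,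
      c.symm (w u) (Δ i)]
    ring

theorem root_norm (c : Ctx B Δ s) {ρ : V} (h : ρ ∈ Phi B Δ) : B ρ ρ = 1 := by
  obtain ⟨w, hw, i, rfl⟩ := h
  rw [c.inv_B hw, c.diag]

theorem conj (c : Ctx B Δ s) {w : V ≃ₗ[ℝ] V} (hw : w ∈ cox B Δ) (i : ι) (u : V) :
    w (s i (w⁻¹ u)) = u - (2 * B (w (Δ i)) u) • w (Δ i) := by
  have h : w (w⁻¹ u) = u := by rw [← LinearEquiv.mul_apply]; simp
  rw [c.hs, map_sub, map_smul, h, ← c.inv_B hw (Δ i), h]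

theorem root_refl (c : Ctx B Δ s) {ρ : V} (h : ρ ∈ Phi B Δ) :
    ∃ w ∈ cox B Δ, ∀ u, w u = u - (2 * B ρ u) • ρ := by
  obtain ⟨w, hw, i, rfl⟩ := h
  refine ⟨w * s i * w⁻¹, mul_mem (mul_mem hw (c.s_mem i)) (inv_mem hw), ?_⟩
  intro u
  exact c.conj hw i u

end Ctx

def len (s : ι → V ≃ₗ[ℝ] V) (w : V ≃ₗ[ℝ] V) : ℕ :=
  sInf {n | ∃ l : List ι, l.length = n ∧ (l.map s).prod = w}

theorem len_le (l : List ι) : len s (l.map s).prod ≤ l.length :=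
  Nat.sInf_le ⟨l, rfl, rfl⟩

namespace Ctx

theorem exists_red (c : Ctx B Δ s) {w : V ≃ₗ[ℝ] V} (hw : w ∈ cox B Δ) :
    ∃ l : List ι, l.length = len s w ∧ (l.map s).prod = w := by
  obtain ⟨l, hl⟩ := c.exists_list hw
  exact Nat.sInf_mem (s := {n | ∃ l : List ι, l.length = n ∧ (l.map s).prod = w}) ⟨_, l, rfl, hl⟩

theorem len_mul_le (c : Ctx B Δ s) {w : V ≃ₗ[ℝ] V} (hw : w ∈ cox B Δ) (l : List ι) :
    len s (w * (l.map s).prod) ≤ len s w + l.length := by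
  obtain ⟨l', h, rfl⟩ := c.exists_red hw
  rw [← h, ← List.prod_append, ← List.map_append, ← List.length_append]
  exact len_le _

end Ctx

def Lt (a b : ι) (k : ℕ) : ι := if Even k then b else a

def word (a b : ι) : ℕ → List ι
  | 0 => []
  | k + 1 => Lt a b k :: word a b k

def Tc (c : ℝ) : ℕ → ℝ
  | 0 => 0
  | 1 => 1
  | k + 2 => c * Tc c (k + 1) - Tc c k

theorem Lt_add_two (a b : ι) (k : ℕ) : Lt a b (k + 2) = Lt a b k := by
  simp [Lt, Nat.even_add]

theorem word_length (a b : ι) (k : ℕ) : (word a b k).length = k := by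
  induction k with
  | zero => rfl
  | succ k ih => simp [word, ih]

theorem word_split (a b : ι) (m d : ℕ) :
    ∃ z : List ι, z.length = d ∧ word a b (m + d) = z ++ word a b m := by
  induction d with
  | zero => exact ⟨[], rfl, rfl⟩
  | succ d ih =>
    obtain ⟨z, h, h'⟩ := ih
    refine ⟨Lt a b (m + d) :: z, by simp [h], ?_⟩
    rw [← add_assoc, word, h']
    rfl

theorem Tc_big {c : ℝ} (hc : 2 ≤ c) (k : ℕ) : 0 ≤ Tc c k ∧ Tc c k ≤ Tc c (k + 1) := by
  induction k with
  | zero => simp [Tc]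
  | succ k ih =>
    refine ⟨ih.1.trans ih.2, ?_⟩
    rw [Tc]
    nlinarith [ih.1, ih.2]

theorem Tc_sin (θ : ℝ) (k : ℕ) :
    Tc (2 * Real.cos θ) k * Real.sin θ = Real.sin (k * θ) ∧
    Tc (2 * Real.cos θ) (k + 1) * Real.sin θ = Real.sin ((k + 1) * θ) := by
  induction k with
  | zero => simp [Tc]
  | succ k ih =>
    refine ⟨by simpa using ih.2, ?_⟩
    rw [Tc, sub_mul, mul_assoc, ih.1, ih.2]
    push_cast
    have e1 : ((k : ℝ) + 1 + 1) * θ = (k + 1) * θ + θ := by ring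
    have e2 : (k : ℝ) * θ = (k + 1) * θ - θ := by ring
    rw [e1, e2, Real.sin_add, Real.sin_sub]
    ring

namespace Ctx

theorem word_root (c : Ctx B Δ s) (a b : ι) (k : ℕ) :
    ((word a b k).map s).prod (Δ a) =
      Tc (-2 * B (Δ a) (Δ b)) (k + 1) • Δ (Lt a b (k + 1)) +
      Tc (-2 * B (Δ a) (Δ b)) k • Δ (Lt a b k) := by
  induction k with
  | zero => simp [word, Tc, Lt]
  | succ k ih =>
    have hB : B (Δ (Lt a b k)) (Δ (Lt a b (k + 1))) = B (Δ a) (Δ b) := by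
      unfold Lt
      by_cases h : Even k
      · simp [h, Nat.even_add_one, c.symm (Δ b)]
      · simp [h, Nat.even_add_one]
    rw [word, List.map_cons, List.prod_cons, LinearEquiv.mul_apply, ih, c.hs, map_add, map_smul,
      map_smul, hB, c.diag, Lt_add_two, Tc]
    simp only [smul_eq_mul]
    module

theorem braid (c : Ctx B Δ s) (a b : ι) (n : ℕ)
    (h : ((word a b n).map s).prod (Δ a) = Δ (Lt a b n)) :
    ((word a b (n + 1)).map s).prod * s a = ((word a b n).map s).prod := by
  have : s (Lt a b n) * ((word a b n).map s).prod = ((word a b n).map s).prod * s a := by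
    ext u
    have := c.conj (c.prod_mem (word a b n)) a (((word a b n).map s).prod u)
    rw [h, ← c.hs] at this
    rw [LinearEquiv.mul_apply, ← this, ← LinearEquiv.mul_apply _⁻¹, inv_mul_cancel]
    rfl
  rw [word, List.map_cons, List.prod_cons, this, mul_assoc, c.s_mul, mul_one]

theorem main (c : Ctx B Δ s) (n : ℕ) : ∀ w ∈ cox B Δ, len s w = n → ∀ a,
    len s w ≤ len s (w * s a) → ∀ i, 0 ≤ Δ.repr (w (Δ a)) i := by
  classical
  induction n using Nat.strong_induction_on with
  | _ n IH =>
  intro w hw hn a hl i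
  obtain ⟨l, hl1, hl2⟩ := c.exists_red hw
  rcases List.eq_nil_or_concat l with rfl | ⟨l', b, rfl⟩
  · have : w = 1 := by rw [← hl2]; simp
    subst this
    simp only [LinearEquiv.coe_one, id_eq, Module.Basis.repr_self]
    rw [Finsupp.single_apply]; split_ifs <;> norm_num
  rw [List.concat_eq_append] at hl1 hl2
  rw [List.length_append, List.length_singleton] at hl1
  rw [List.map_append, List.prod_append, List.map_singleton, List.prod_singleton] at hl2
  have hab : a ≠ b := by
    rintro rfl
    rw [← hl2, mul_assoc, c.s_mul, mul_one, hl2] at hl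
    have := len_le (s := s) l'
    omega
  let P : ℕ → Prop := fun k => ∃ v ∈ cox B Δ, w = v * ((word a b k).map s).prod ∧
    len s v + k = len s w
  have hP1 : P 1 := by
    refine ⟨(l'.map s).prod, c.prod_mem _, ?_, ?_⟩
    · simp [word, Lt, hl2]
    · have h1 := len_le (s := s) l'
      have h2 := c.len_mul_le (c.prod_mem l') [b]
      simp only [List.map_singleton, List.prod_singleton, List.length_singleton, hl2] at h2
      omega
  obtain ⟨k, hkP, hk1, hmax⟩ : ∃ k, P k ∧ 1 ≤ k ∧ ¬ P (k + 1) := by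
    by_contra hcon
    push Not at hcon
    have : ∀ k, P (k + 1) := by
      intro k
      induction k with
      | zero => exact hP1
      | succ k ih => exact hcon _ ih (by omega)
    obtain ⟨v, _, _, h⟩ := this (len s w)
    omega
  obtain ⟨j, rfl⟩ : ∃ j, k = j + 1 := ⟨k - 1, by omega⟩
  obtain ⟨v, hv, hwv, hlen⟩ := hkP
  have hA : len s v ≤ len s (v * s (Lt a b (j + 1))) := by
    by_contra hcon
    push Not at hcon
    apply hmax
    have e : w = (v * s (Lt a b (j + 1))) * ((word a b (j + 1 + 1)).map s).prod := by
      rw [word, List.map_cons, List.prod_cons, mul_assoc, ← mul_assoc (s _), c.s_mul, one_mul]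
      exact hwv
    refine ⟨_, mul_mem hv (c.s_mem _), e, ?_⟩
    have h2 := c.len_mul_le (mul_mem hv (c.s_mem (Lt a b (j + 1)))) (word a b (j + 1 + 1))
    rw [← e, word_length] at h2
    omega
  have hB : len s v ≤ len s (v * s (Lt a b j)) := by
    by_contra hcon
    push Not at hcon
    have h2 := c.len_mul_le (mul_mem hv (c.s_mem (Lt a b j))) (word a b j)
    rw [word_length, mul_assoc] at h2
    rw [word, List.map_cons, List.prod_cons] at hwv
    rw [← hwv] at h2
    omega
  have pA := IH (len s v) (by omega) v hv rfl _ hA i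
  have pB := IH (len s v) (by omega) v hv rfl _ hB i
  suffices hT : 0 ≤ Tc (-2 * B (Δ a) (Δ b)) (j + 1 + 1) ∧ 0 ≤ Tc (-2 * B (Δ a) (Δ b)) (j + 1) by
    rw [hwv, LinearEquiv.mul_apply, c.word_root, map_add, map_smul, map_smul, Lt_add_two]
    simp only [map_add, map_smul, Finsupp.add_apply, Finsupp.smul_apply, smul_eq_mul]
    exact add_nonneg (mul_nonneg hT.1 pB) (mul_nonneg hT.2 pA)
  rcases c.off a b hab with h | ⟨m, hm, h⟩
  · have := Tc_big (c := -2 * B (Δ a) (Δ b)) (by linarith)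
    exact ⟨(this _).1, (this _).1⟩
  have hc : -2 * B (Δ a) (Δ b) = 2 * Real.cos (Real.pi / m) := by rw [h]; ring
  have hm0 : (2 : ℝ) ≤ m := by exact_mod_cast hm
  have hpi := Real.pi_pos
  set θ := Real.pi / (m : ℝ) with hθ
  have hmθ : m * θ = Real.pi := by rw [hθ]; field_simp
  have hθ0 : 0 < θ := by positivity
  have hsin : 0 < Real.sin θ := Real.sin_pos_of_pos_of_lt_pi hθ0 (by nlinarith)
  have hpos : ∀ q : ℕ, q ≤ m → 0 ≤ Tc (2 * Real.cos θ) q := by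
    intro q hq
    have h1 := (Tc_sin θ q).1
    have hq' : (q : ℝ) ≤ m := by exact_mod_cast hq
    have h2 : 0 ≤ Real.sin (q * θ) :=
      Real.sin_nonneg_of_nonneg_of_le_pi (by positivity) (by nlinarith)
    rw [← h1] at h2
    exact nonneg_of_mul_nonneg_left h2 hsin
  rcases lt_or_ge (j + 1) m with hjm | hjm
  · rw [hc]; exact ⟨hpos _ hjm, hpos _ hjm.le⟩
  exfalso
  obtain ⟨p, rfl⟩ : ∃ p, m = p + 1 := ⟨m - 1, by omega⟩
  have hTp := Tc_sin θ p
  push_cast at hmθ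
  rw [hmθ, Real.sin_pi] at hTp
  have e1 : (p : ℝ) * θ = Real.pi - θ := by linarith
  rw [e1, Real.sin_pi_sub] at hTp
  have t0 : Tc (2 * Real.cos θ) (p + 1) = 0 := by
    rcases mul_eq_zero.1 hTp.2 with h | h
    · exact h
    · exact absurd h hsin.ne'
  have t1 : Tc (2 * Real.cos θ) p = 1 := mul_right_cancel₀ hsin.ne' (by rw [hTp.1, one_mul])
  have hb := c.braid a b p (by rw [c.word_root, hc, t0, t1]; simp)
  obtain ⟨d, hd⟩ := Nat.exists_eq_add_of_le hjm
  obtain ⟨z, hz, hz'⟩ := word_split a b (p + 1) d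
  rw [hd, hz', List.map_append, List.prod_append] at hwv
  have e2 : w * s a = v * ((z ++ word a b p).map s).prod := by
    rw [hwv, List.map_append, List.prod_append, ← hb]
    simp only [mul_assoc]
  have h2 := c.len_mul_le hv (z ++ word a b p)
  rw [← e2, List.length_append, word_length] at h2
  omega

theorem dich (c : Ctx B Δ s) {ρ : V} (h : ρ ∈ Phi B Δ) :
    (∀ i, 0 ≤ Δ.repr ρ i) ∨ (∀ i, 0 ≤ Δ.repr (-ρ) i) := by
  obtain ⟨w, hw, a, rfl⟩ := h
  rcases le_total (len s w) (len s (w * s a)) with h | h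
  · exact Or.inl (c.main _ w hw rfl a h)
  · right
    have := c.main _ (w * s a) (mul_mem hw (c.s_mem a)) rfl a
      (by rw [mul_assoc, c.s_mul, mul_one]; exact h)
    rw [LinearEquiv.mul_apply, c.s_self, map_neg] at this
    exact this

theorem root_ne (c : Ctx B Δ s) {ρ : V} (h : ρ ∈ Phi B Δ) : ρ ≠ 0 := by
  rintro rfl
  have := c.root_norm h
  simp at this

end Ctx

theorem l1_pos {v : V} (h : ∀ i, 0 ≤ Δ.repr v i) (h0 : v ≠ 0) : 0 < l1 Δ v := by
  have h1 : 0 ≤ l1 Δ v := Finset.sum_nonneg (fun i _ => h i)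
  rcases h1.lt_or_eq with h1 | h1
  · exact h1
  · exfalso
    apply h0
    have := (Finset.sum_eq_zero_iff_of_nonneg (fun i _ => h i)).1 h1.symm
    apply Δ.repr.injective
    ext i
    simpa using this i (Finset.mem_univ _)

theorem l1_add (u v : V) : l1 Δ (u + v) = l1 Δ u + l1 Δ v := by
  simp [l1, Finset.sum_add_distrib]

theorem l1_smul (c : ℝ) (v : V) : l1 Δ (c • v) = c * l1 Δ v := by
  simp [l1, Finset.mul_sum]

theorem l1_neg (v : V) : l1 Δ (-v) = - l1 Δ v := by
  simp [l1]

theorem l1_sub (u v : V) : l1 Δ (u - v) = l1 Δ u - l1 Δ v := by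
  simp [l1]

theorem l1_basis (i : ι) : l1 Δ (Δ i) = 1 := by
  classical
  simp [l1, Finsupp.single_apply]

namespace Ctx

theorem l1_ne (c : Ctx B Δ s) {ρ : V} (h : ρ ∈ Phi B Δ) : l1 Δ ρ ≠ 0 := by
  rcases c.dich h with h' | h'
  · exact (l1_pos h' (c.root_ne h)).ne'
  · have := l1_pos h' (neg_ne_zero.2 (c.root_ne h))
    rw [l1_neg] at this
    linarith

theorem pos_of_l1 (c : Ctx B Δ s) {ρ : V} (h : ρ ∈ Phi B Δ) (hl : 0 < l1 Δ ρ) :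
    ρ ∈ posPhi B Δ := by
  refine ⟨h, ?_⟩
  rcases c.dich h with h' | h'
  · exact h'
  · have := l1_pos h' (neg_ne_zero.2 (c.root_ne h))
    rw [l1_neg] at this
    linarith

theorem phi_map (c : Ctx B Δ s) {w : V ≃ₗ[ℝ] V} (hw : w ∈ cox B Δ) {ρ : V} (h : ρ ∈ Phi B Δ) :
    w ρ ∈ Phi B Δ := by
  obtain ⟨v, hv, a, rfl⟩ := h
  exact ⟨w * v, mul_mem hw hv, a, rfl⟩

theorem eq_one (c : Ctx B Δ s) {w : V ≃ₗ[ℝ] V} (hw : w ∈ cox B Δ)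
    (h : ∀ i, w (Δ i) ∈ posPhi B Δ) : w = 1 := by
  obtain ⟨l, hl1, hl2⟩ := c.exists_red hw
  rcases List.eq_nil_or_concat l with rfl | ⟨l', b, rfl⟩
  · rw [← hl2]; simp
  exfalso
  rw [List.concat_eq_append] at hl1 hl2
  rw [List.length_append, List.length_singleton] at hl1
  rw [List.map_append, List.prod_append, List.map_singleton, List.prod_singleton] at hl2
  have e : w * s b = (l'.map s).prod := by rw [← hl2, mul_assoc, c.s_mul, mul_one]
  have := c.main _ (w * s b) (mul_mem hw (c.s_mem b)) rfl b
    (by rw [mul_assoc, c.s_mul, mul_one, e]; have := len_le (s := s) l'; omega)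
  rw [LinearEquiv.mul_apply, c.s_self, map_neg] at this
  have h1 := l1_pos this (neg_ne_zero.2 (c.root_ne (h b).1))
  have h2 := l1_pos (h b).2 (c.root_ne (h b).1)
  rw [l1_neg] at h1
  linarith

theorem simple_perm (c : Ctx B Δ s) {ρ : V} (h : ρ ∈ posPhi B Δ) (a : ι) (hne : ρ ≠ Δ a) :
    s a ρ ∈ posPhi B Δ := by
  classical
  refine ⟨c.phi_map (c.s_mem a) h.1, ?_⟩
  rcases c.dich (c.phi_map (c.s_mem a) h.1) with h' | h'
  · exact h'
  exfalso
  have hz : ∀ j, j ≠ a → Δ.repr ρ j = 0 := by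
    intro j hj
    have h1 := h' j
    have h2 := h.2 j
    rw [c.hs] at h1
    simp [Finsupp.single_apply, hj.symm] at h1
    linarith
  have e : ρ = Δ.repr ρ a • Δ a := by
    apply Δ.repr.injective
    ext j
    by_cases hj : j = a
    · subst hj; simp
    · simp [hz j hj, Finsupp.single_apply, Ne.symm hj]
  have h1 := c.root_norm h.1
  have h0 := h.2 a
  rw [e] at h1
  simp only [map_smul, LinearMap.smul_apply, smul_eq_mul, c.diag] at h1
  have : Δ.repr ρ a = 1 := by nlinarith
  rw [this, one_smul] at e
  exact hne e

theorem inv_finite (c : Ctx B Δ s) {w : V ≃ₗ[ℝ] V} (hw : w ∈ cox B Δ) :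
    {ρ | ρ ∈ posPhi B Δ ∧ w ρ ∉ posPhi B Δ}.Finite := by
  refine c.list_induction (P := fun w => {ρ | ρ ∈ posPhi B Δ ∧ w ρ ∉ posPhi B Δ}.Finite) ?_ ?_ hw
  · refine Set.finite_empty.subset ?_
    rintro ρ ⟨h1, h2⟩
    exact absurd h1 h2
  · intro i w hw ih
    refine (ih.union (Set.finite_singleton (w⁻¹ (Δ i)))).subset ?_
    rintro ρ ⟨h1, h2⟩
    by_cases h3 : w ρ ∈ posPhi B Δ
    · right
      by_contra h4
      apply h2
      apply c.simple_perm h3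
      intro h5
      apply h4
      rw [← h5]
      show ρ = (w⁻¹ * w) ρ
      simp
    · left; exact ⟨h1, h3⟩

end Ctx

theorem fd (Δ : Module.Basis ι ℝ V) : FiniteDimensional ℝ V := Module.Finite.of_basis Δ

theorem cont_l1 (Δ : Module.Basis ι ℝ V) : Continuous (l1 Δ) := by
  haveI := fd Δ
  exact LinearMap.continuous_of_finiteDimensional
    (⟨⟨l1 Δ, l1_add⟩, l1_smul⟩ : V →ₗ[ℝ] ℝ)

theorem cont_repr (Δ : Module.Basis ι ℝ V) (i : ι) : Continuous (fun v => Δ.repr v i) := by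
  haveI := fd Δ
  exact LinearMap.continuous_of_finiteDimensional (Δ.coord i)

theorem cont_B (Δ : Module.Basis ι ℝ V) (B : LinearMap.BilinForm ℝ V) :
    Continuous (fun p : V × V => B p.1 p.2) := by
  have : (fun p : V × V => B p.1 p.2) =
      fun p => ∑ i, ∑ j, Δ.repr p.1 i * (Δ.repr p.2 j * B (Δ i) (Δ j)) := by
    ext p
    conv_lhs => rw [← Δ.sum_repr p.1, ← Δ.sum_repr p.2]
    simp only [map_sum, map_smul, LinearMap.sum_apply, LinearMap.smul_apply, smul_eq_mul,
      Finset.mul_sum]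
    rw [Finset.sum_comm]
    refine Finset.sum_congr rfl fun i _ => Finset.sum_congr rfl fun j _ => ?_
    ring
  rw [this]
  have h := cont_repr Δ
  refine continuous_finsetSum _ fun i _ => continuous_finsetSum _ fun j _ => ?_
  exact ((h i).comp continuous_fst).mul (((h j).comp continuous_snd).mul continuous_const)

namespace Ctx

theorem bdd_finite (c : Ctx B Δ s) (M : ℝ) : {ρ | ρ ∈ posPhi B Δ ∧ l1 Δ ρ ≤ M}.Finite := by
  by_contra hinf
  have hinf : {ρ | ρ ∈ posPhi B Δ ∧ l1 Δ ρ ≤ M}.Infinite := hinf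
  haveI := fd Δ
  let K : Set V := Δ.equivFunL.symm '' (Set.Icc (0 : ι → ℝ) (fun _ => M))
  have hK : IsCompact K := isCompact_Icc.image Δ.equivFunL.symm.continuous
  have hsub : {ρ | ρ ∈ posPhi B Δ ∧ l1 Δ ρ ≤ M} ⊆ K := by
    rintro ρ ⟨h1, h2⟩
    refine ⟨Δ.equivFunL ρ, ⟨fun i => h1.2 i, fun i => ?_⟩, by simp⟩
    exact (Finset.single_le_sum (f := fun i => Δ.repr ρ i) (fun i _ => h1.2 i)
      (Finset.mem_univ i)).trans h2
  obtain ⟨β, _, hβ⟩ := hinf.exists_accPt_of_subset_isCompact hK hsub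
  rw [accPt_iff_nhds] at hβ
  have cB := cont_B Δ B
  have hββ : B β β = 1 := by
    by_contra hne
    have hU : {v : V | B v v ≠ 1} ∈ 𝓝 β := by
      refine IsOpen.mem_nhds ?_ hne
      exact isOpen_ne.preimage (cB.comp (continuous_id.prodMk continuous_id))
    obtain ⟨y, ⟨hy1, hy2⟩, _⟩ := hβ _ hU
    exact hy1 (c.root_norm hy2.1.1)
  let R : V → V → V := fun a u => u - (2 * B a u) • a
  have hR : ∀ i, Continuous (fun p : V × V => l1 Δ (R p.1 (R p.2 (Δ i)))) := by
    intro i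
    have c1 : Continuous (fun p : V × V => R p.2 (Δ i)) := by
      have := cB.comp (continuous_snd.prodMk continuous_const : Continuous fun p : V × V => (p.2, Δ i))
      exact continuous_const.sub ((continuous_const.mul this).smul continuous_snd)
    have := cB.comp (continuous_fst.prodMk c1)
    exact (cont_l1 Δ).comp (c1.sub ((continuous_const.mul this).smul continuous_fst))
  have hRβ : ∀ i, R β (R β (Δ i)) = Δ i := by
    intro i
    simp only [R, map_sub, map_smul, smul_eq_mul, hββ]
    module
  have hW : {p : V × V | ∀ i, 0 < l1 Δ (R p.1 (R p.2 (Δ i)))} ∈ 𝓝 (β, β) := by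
    have : ∀ᶠ p in 𝓝 (β, β), ∀ i, 0 < l1 Δ (R p.1 (R p.2 (Δ i))) := by
      rw [eventually_all]
      intro i
      refine (hR i).continuousAt.eventually_const_lt (u := 0) ?_
      simp only [hRβ, l1_basis]
      norm_num
    exact this
  rw [nhds_prod_eq, mem_prod_same_iff] at hW
  obtain ⟨U, hU, hUW⟩ := hW
  obtain ⟨y, ⟨hy1, hy2⟩, hyβ⟩ := hβ U hU
  obtain ⟨z, ⟨hz1, hz2⟩, _⟩ := hβ (U ∩ {y}ᶜ) (inter_mem hU (isOpen_compl_singleton.mem_nhds hyβ.symm))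
  obtain ⟨w1, hw1, e1⟩ := c.root_refl hy2.1.1
  obtain ⟨w2, hw2, e2⟩ := c.root_refl hz2.1.1
  have hone : w1 * w2 = 1 := by
    apply c.eq_one (mul_mem hw1 hw2)
    intro i
    apply c.pos_of_l1 (c.phi_map (mul_mem hw1 hw2) ⟨1, one_mem _, i, rfl⟩)
    have := hUW (Set.mk_mem_prod hy1 hz1.1) i
    simp only [R] at this
    rw [LinearEquiv.mul_apply, e2, e1]
    exact this
  have hz : w1 (w2 z) = z := by
    rw [← LinearEquiv.mul_apply, hone]; rfl
  have nz := c.root_norm hz2.1.1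
  have ny := c.root_norm hy2.1.1
  rw [e2, nz] at hz
  have hz' : z - (2 * 1 : ℝ) • z = -z := by module
  rw [hz', map_neg, e1] at hz
  have hzy : z = B y z • y := by
    have h2 : (2 : ℝ) • z = (2 : ℝ) • (B y z • y) := by
      have := sub_eq_zero.2 hz
      rw [← sub_eq_zero]
      rw [← neg_eq_zero, ← this]
      module
    exact smul_right_injective V (two_ne_zero' ℝ) h2
  have hsq : B y z * B y z = 1 := by
    rw [hzy] at nz
    simp only [map_smul, LinearMap.smul_apply, smul_eq_mul, ny] at nz
    simpa using nz
  have p1 := l1_pos hy2.1.2 (c.root_ne hy2.1.1)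
  have p2 := l1_pos hz2.1.2 (c.root_ne hz2.1.1)
  rw [hzy, l1_smul] at p2
  have p3 : 0 < B y z := pos_of_mul_pos_left p2 p1.le
  have : B y z = 1 := by nlinarith
  rw [this, one_smul] at hzy
  exact hz1.2 hzy

theorem Eprops (c : Ctx B Δ s) {x : V} (hx : x ∈ Eset B Δ) :
    B x x = 0 ∧ ∀ w ∈ cox B Δ, 0 < l1 Δ (w x) := by
  haveI := fd Δ
  have hx : (𝓝[≠] x ⊓ 𝓟 (nrm Δ '' posPhi B Δ)).NeBot := hx
  let F : Filter V := comap (nrm Δ) (𝓝[≠] x) ⊓ 𝓟 (posPhi B Δ)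
  have hF : F.NeBot := by
    rw [← Filter.map_neBot_iff (nrm Δ)]
    rw [Filter.push_pull', map_principal]
    exact hx
  have hpos : ∀ᶠ ρ in F, ρ ∈ posPhi B Δ := mem_inf_of_right (mem_principal_self _)
  have hT0 : Tendsto (nrm Δ) F (𝓝[≠] x) := tendsto_comap.mono_left inf_le_left
  have hT : Tendsto (nrm Δ) F (𝓝 x) := hT0.mono_right inf_le_left
  have hfin : ∀ S : Set V, S.Finite → ∀ᶠ ρ in F, ρ ∉ S := by
    intro S hS
    have h1 : (nrm Δ '' S).Finite := hS.image _
    have h2 : ∀ᶠ y in 𝓝[≠] x, y ∉ nrm Δ '' S := by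
      have := (h1.subset (Set.diff_subset (t := {x}))).isClosed.isOpen_compl.mem_nhds
        (show x ∈ (nrm Δ '' S \ {x})ᶜ by simp)
      filter_upwards [mem_inf_of_left this, mem_inf_of_right (mem_principal_self _)] with y hy hy2 hy3
      exact hy ⟨hy3, hy2⟩
    filter_upwards [hT0.eventually h2] with ρ h3 h4
    exact h3 ⟨ρ, h4, rfl⟩
  have hl : Tendsto (l1 Δ) F atTop := by
    rw [tendsto_atTop]
    intro M
    filter_upwards [hfin _ (c.bdd_finite M), hpos] with ρ h1 h2
    by_contra h3
    exact h1 ⟨h2, (not_le.1 h3).le⟩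
  have hlx : l1 Δ x = 1 := by
    refine tendsto_nhds_unique (((cont_l1 Δ).tendsto x).comp hT) ?_
    refine tendsto_const_nhds.congr' ?_
    filter_upwards [hpos] with ρ h
    simp only [Function.comp, nrm, l1_smul]
    rw [inv_mul_cancel₀ (c.l1_ne h.1)]
  have hx0 : x ≠ 0 := by
    rintro rfl
    simp [l1] at hlx
  constructor
  · have h1 : Tendsto (fun ρ => B (nrm Δ ρ) (nrm Δ ρ)) F (𝓝 (B x x)) :=
      (((cont_B Δ B).comp (continuous_id.prodMk continuous_id)).tendsto x).comp hT
    have h2 : Tendsto (fun ρ => (l1 Δ ρ)⁻¹ * (l1 Δ ρ)⁻¹) F (𝓝 (0 * 0)) :=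
      (tendsto_inv_atTop_zero.comp hl).mul (tendsto_inv_atTop_zero.comp hl)
    rw [mul_zero] at h2
    refine tendsto_nhds_unique h1 (h2.congr' ?_)
    filter_upwards [hpos] with ρ h
    simp only [nrm, map_smul, LinearMap.smul_apply, smul_eq_mul, c.root_norm h.1, mul_one]
  · intro w hw
    apply l1_pos
    · intro i
      have cw : Continuous w := LinearMap.continuous_of_finiteDimensional (w : V →ₗ[ℝ] V)
      have h1 : Tendsto (fun ρ => Δ.repr (w (nrm Δ ρ)) i) F (𝓝 (Δ.repr (w x) i)) :=
        (((cont_repr Δ i).comp cw).tendsto x).comp hT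
      refine ge_of_tendsto h1 ?_
      filter_upwards [hpos, hfin _ (c.inv_finite hw)] with ρ h2 h3
      have h4 : w ρ ∈ posPhi B Δ := by
        by_contra h5; exact h3 ⟨h2, h5⟩
      simp only [nrm, map_smul, Finsupp.smul_apply, smul_eq_mul]
      exact mul_nonneg (inv_nonneg.2 (l1_pos h2.2 (c.root_ne h2.1)).le) (h4.2 i)
    · simpa using hx0

theorem vis (c : Ctx B Δ s) {x v : V} (hx : B x x = 0) (hv : 0 < B v v) :
    visible B x v ↔ 0 ≤ B v x := by
  have key : ∀ a b : ℝ, B (a • v + b • x) (a • v + b • x) = a * (a * B v v + 2 * b * B v x) := by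
    intro a b
    simp only [map_add, map_smul, LinearMap.add_apply, LinearMap.smul_apply, smul_eq_mul, hx,
      c.symm x v]
    ring
  constructor
  · intro h
    by_contra hneg
    push Not at hneg
    set D := B v v - 2 * B v x with hD
    have hDp : 0 < D := by linarith
    let y := (-2 * B v x / D) • v + (B v v / D) • x
    have hy : y ∈ segment ℝ v x ∩ isoQ B := by
      refine ⟨⟨-2 * B v x / D, B v v / D, ?_, by positivity, ?_, rfl⟩, ?_⟩
      · apply div_nonneg _ hDp.le; linarith
      · rw [← add_div, div_eq_one_iff_eq hDp.ne']; ring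
      · show B y y = 0
        rw [key]; field_simp; ring
    have hyx : y = x := by rw [h] at hy; exact hy
    have h1 : B y v = B v x := by rw [hyx, c.symm]
    simp only [y, map_add, map_smul, LinearMap.add_apply, LinearMap.smul_apply, smul_eq_mul,
      c.symm x v] at h1
    field_simp at h1
    nlinarith
  · intro h
    ext y
    constructor
    · rintro ⟨⟨a, b, ha, hb, hab, rfl⟩, hy⟩
      have hy : B (a • v + b • x) (a • v + b • x) = 0 := hy
      rw [key] at hy
      have : a = 0 := by
        rcases mul_eq_zero.1 hy with h1 | h1
        · exact h1
        · have : 0 ≤ 2 * b * B v x := by positivity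
          have h3 : 0 ≤ a * B v v := by positivity
          have : a * B v v = 0 := by linarith
          rcases mul_eq_zero.1 this with h | h
          · exact h
          · linarith
      subst this
      have : b = 1 := by linarith
      subst this
      simp
    · rintro rfl
      exact ⟨right_mem_segment _ _ _, hx⟩

end Ctx

/-- Visibility criterion.  Let `x ∈ E(Φ)` and `ρ ∈ Φ`.  Then:
(i) `x` is visible from `ρ̂` iff `B(ρ̂,x) ≥ 0`;
(ii) if `ρ ∈ Φ⁺`, `x` is visible from `ρ̂` iff `B(ρ,x) ≥ 0`;
(iii) if `ρ ∈ Φ⁺` and `w ∈ W` with `w(ρ) ∈ Φ⁺`, then `x` is visible from `ρ̂` iff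
`w·x` is visible from `w·ρ̂`. -/
theorem statement13 (B : LinearMap.BilinForm ℝ V) (Δ : Module.Basis ι ℝ V)
    (hsymm : ∀ u v : V, B u v = B v u)
    (hdiag : ∀ i : ι, B (Δ i) (Δ i) = 1)
    (hoff : ∀ i j : ι, i ≠ j → B (Δ i) (Δ j) ≤ -1 ∨
      ∃ k : ℕ, 2 ≤ k ∧ B (Δ i) (Δ j) = -Real.cos (Real.pi / (k : ℝ)))
    (x : V) (hx : x ∈ Eset B Δ) (ρ : V) (hρ : ρ ∈ Phi B Δ) :
    (visible B x (nrm Δ ρ) ↔ 0 ≤ B (nrm Δ ρ) x) ∧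
    (ρ ∈ posPhi B Δ → (visible B x (nrm Δ ρ) ↔ 0 ≤ B ρ x)) ∧
    (∀ w ∈ cox B Δ, ρ ∈ posPhi B Δ → w ρ ∈ posPhi B Δ →
      (visible B x (nrm Δ ρ) ↔ visible B (nrm Δ (w x)) (nrm Δ (w ρ)))) := by
  obtain ⟨s, c⟩ := exists_ctx hsymm hdiag hoff
  obtain ⟨hxx, hw⟩ := c.Eprops hx
  have np : ∀ ρ ∈ Phi B Δ, 0 < B (nrm Δ ρ) (nrm Δ ρ) := by
    intro ρ h
    simp only [nrm, map_smul, LinearMap.smul_apply, smul_eq_mul, c.root_norm h, mul_one]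
    exact mul_self_pos.2 (inv_ne_zero (c.l1_ne h))
  have h2 : ρ ∈ posPhi B Δ → (visible B x (nrm Δ ρ) ↔ 0 ≤ B ρ x) := by
    intro h
    rw [c.vis hxx (np ρ hρ)]
    have := inv_pos.2 (l1_pos h.2 (c.root_ne hρ))
    simp only [nrm, map_smul, LinearMap.smul_apply, smul_eq_mul]
    exact mul_nonneg_iff_of_pos_left this
  refine ⟨c.vis hxx (np ρ hρ), h2, ?_⟩
  intro w hwm h h'
  have p1 := inv_pos.2 (hw w hwm)
  have p2 := inv_pos.2 (l1_pos h'.2 (c.root_ne h'.1))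
  rw [h2 h, c.vis _ (np _ h'.1)]
  · simp only [nrm, map_smul, LinearMap.smul_apply, smul_eq_mul, c.inv_B hwm]
    rw [mul_nonneg_iff_of_pos_left (by assumption), mul_nonneg_iff_of_pos_left (by assumption)]
  · simp only [nrm, map_smul, LinearMap.smul_apply, smul_eq_mul, c.inv_B hwm, hxx, mul_zero]
end
end
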